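/- Let 0 < d < 1 and let a, b be real numbers with 0 < a < 1 and 0 < b < 1. Then ∫₀¹ (1 - a b z)^{-d} (1 - b z)^{-d} dz = (1/(d-1)) b^{-1} (1-b)^{1-d} (1-ab)^{-d} ₂F₁(1,d;2-d; a(1-b)/(1-ab)) − (1/(d-1)) b^{-1} ₂F₁(1,d;2-d;a). -/

import Mathlib

open Real MeasureTheory

/-- Pochhammer symbol `(a)_k = a (a+1) ⋯ (a+k-1)` for real `a`. -/
noncomputable def poch (a : ℝ) (k : ℕ) : ℝ := (ascPochhammer ℝ k).eval a

/-- Gaussian hypergeometric function `₂F₁(a,b;c;z)`. -/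
noncomputable def hyp2F1 (a b c z : ℝ) : ℝ :=
  ∑' k : ℕ, (poch a k * poch b k) / poch c k * z ^ k / (Nat.factorial k)

/-- Generalized hypergeometric function `₃F₂(a₁,a₂,a₃;b₁,b₂;z)`. -/
noncomputable def hyp3F2 (a₁ a₂ a₃ b₁ b₂ z : ℝ) : ℝ :=
  ∑' k : ℕ, (poch a₁ k * poch a₂ k * poch a₃ k) / (poch b₁ k * poch b₂ k) * z ^ k /
    (Nat.factorial k)

/-- Generalized hypergeometric function `₄F₃(a₁,a₂,a₃,a₄;b₁,b₂,b₃;z)`. -/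
noncomputable def hyp4F3 (a₁ a₂ a₃ a₄ b₁ b₂ b₃ z : ℝ) : ℝ :=
  ∑' k : ℕ, (poch a₁ k * poch a₂ k * poch a₃ k * poch a₄ k) /
    (poch b₁ k * poch b₂ k * poch b₃ k) * z ^ k / (Nat.factorial k)

lemma poch_succ_aux (a : ℝ) (k : ℕ) : poch a (k + 1) = poch a k * (a + k) := by
  simp [poch, ascPochhammer_succ_eval]

lemma poch_pos_aux (a : ℝ) (ha : 0 < a) (k : ℕ) : 0 < poch a k :=
  ascPochhammer_pos k a ha

lemma poch_one_aux (k : ℕ) : poch 1 k = k.factorial := by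
  simp [poch, ascPochhammer_eval_one]

/-- coefficients -/
noncomputable def cc (d : ℝ) (k : ℕ) : ℝ := poch d k / poch (2 - d) k

lemma hyp_eq_aux (d x : ℝ) : hyp2F1 1 d (2 - d) x = ∑' k : ℕ, cc d k * x ^ k := by
  unfold hyp2F1 cc
  refine tsum_congr fun k => ?_
  rw [poch_one_aux]
  have : (k.factorial : ℝ) ≠ 0 := by positivity
  field_simp

lemma cc_succ (d : ℝ) (hd1 : d < 1) (k : ℕ) :
    (k + 2 - d) * cc d (k + 1) = (k + d) * cc d k := by
  unfold cc
  rw [poch_succ_aux, poch_succ_aux]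
  have h1 := (poch_pos_aux (2 - d) (by linarith) k).ne'
  have h0 : (0:ℝ) ≤ k := by positivity
  have h2 : (2 - d + k : ℝ) ≠ 0 := by linarith
  field_simp
  ring

lemma cc_nonneg (d : ℝ) (hd0 : 0 < d) (hd1 : d < 1) (k : ℕ) : 0 ≤ cc d k :=
  div_nonneg (poch_pos_aux _ hd0 k).le (poch_pos_aux _ (by linarith) k).le

lemma cc_le (d : ℝ) (hd0 : 0 < d) (hd1 : d < 1) (k : ℕ) : cc d k ≤ 1 := by
  induction k with
  | zero => simp [cc, poch]
  | succ k ih =>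
    have h := cc_succ d hd1 k
    have h0 : (0:ℝ) ≤ k := by positivity
    have h2 : (k + d) * cc d k ≤ (k + d) * 1 := by gcongr
    by_contra hc
    push Not at hc
    nlinarith

lemma summ1 (d x : ℝ) (hd0 : 0 < d) (hd1 : d < 1) (hx0 : 0 ≤ x) (hx : x < 1) :
    Summable fun k : ℕ => cc d k * x ^ k := by
  refine Summable.of_nonneg_of_le (fun k => mul_nonneg (cc_nonneg d hd0 hd1 k) (by positivity))
    (fun k => ?_) (summable_geometric_of_lt_one hx0 hx)
  have := cc_le d hd0 hd1 k
  have h : cc d k * x ^ k ≤ 1 * x ^ k := by gcongr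
  simpa using h

lemma summ_n (x : ℝ) (hx0 : 0 ≤ x) (hx : x < 1) :
    Summable fun k : ℕ => (k:ℝ) * x ^ (k - 1) := by
  rw [← summable_nat_add_iff 1]
  have h1 := summable_pow_mul_geometric_of_norm_lt_one (R := ℝ) 1 (r := x)
    (by rwa [Real.norm_of_nonneg hx0])
  have h2 := summable_geometric_of_lt_one hx0 hx
  refine (h1.add h2).congr fun k => ?_
  push_cast
  simp
  ring

lemma summ2 (d x : ℝ) (hd0 : 0 < d) (hd1 : d < 1) (hx0 : 0 ≤ x) (hx : x < 1) :
    Summable fun k : ℕ => cc d k * (k * x ^ (k - 1)) := by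
  refine Summable.of_nonneg_of_le (fun k => mul_nonneg (cc_nonneg d hd0 hd1 k) (by positivity))
    (fun k => ?_) (summ_n x hx0 hx)
  have := cc_le d hd0 hd1 k
  have h : cc d k * (k * x ^ (k - 1)) ≤ 1 * (k * x ^ (k - 1)) := by gcongr
  simpa using h

lemma F_deriv (d x : ℝ) (hd0 : 0 < d) (hd1 : d < 1) (hx0 : 0 ≤ x) (hx : x < 1) :
    HasDerivAt (fun y => ∑' k : ℕ, cc d k * y ^ k)
      (∑' k : ℕ, cc d k * (k * x ^ (k - 1))) x := by
  obtain ⟨r, hr1, hr2⟩ := exists_between hx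
  have hr0 : 0 < r := by linarith
  refine hasDerivAt_tsum_of_isPreconnected (t := Metric.ball (0:ℝ) r) (y₀ := 0)
    (u := fun k : ℕ => (k:ℝ) * r ^ (k - 1))
    (g := fun k y => cc d k * y ^ k) (g' := fun k y => cc d k * (k * y ^ (k - 1)))
    (summ_n r hr0.le hr2) Metric.isOpen_ball
    (convex_ball _ _).isPreconnected ?_ ?_ ?_ ?_ ?_
  · intro n y _
    exact (hasDerivAt_pow n y).const_mul _
  · intro n y hy
    have hy' : |y| ≤ r := by
      have := Metric.mem_ball.1 hy
      rw [Real.dist_eq, sub_zero] at this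
      exact this.le
    rw [norm_mul, norm_mul, norm_pow, Real.norm_of_nonneg (cc_nonneg d hd0 hd1 n),
      Real.norm_eq_abs y, Real.norm_of_nonneg (Nat.cast_nonneg n)]
    have := cc_le d hd0 hd1 n
    calc cc d n * (n * |y| ^ (n - 1)) ≤ 1 * (n * r ^ (n - 1)) := by gcongr
      _ = _ := one_mul _
  · simpa using hr0
  · exact summ1 d 0 hd0 hd1 le_rfl one_pos
  · rw [Metric.mem_ball, Real.dist_eq, sub_zero, abs_of_nonneg hx0]; exact hr1

lemma hasSum_congr_aux {f g : ℕ → ℝ} {s t : ℝ} (h : HasSum f s) (hfg : ∀ k, g k = f k)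
    (hst : t = s) : HasSum g t := by
  rw [hst, funext hfg]; exact h

lemma F_ode (d x : ℝ) (hd0 : 0 < d) (hd1 : d < 1) (hx0 : 0 ≤ x) (hx : x < 1) :
    x * (1 - x) * (∑' k : ℕ, cc d k * (k * x ^ (k - 1)))
      + (1 - d - d * x) * (∑' k : ℕ, cc d k * x ^ k) = 1 - d := by
  have H1 := (summ1 d x hd0 hd1 hx0 hx).hasSum
  have H2 := (summ2 d x hd0 hd1 hx0 hx).hasSum
  set S := ∑' k : ℕ, cc d k * x ^ k
  set T := ∑' k : ℕ, cc d k * (k * x ^ (k - 1))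
  have e : ∀ k : ℕ, (k:ℝ) * x ^ (k - 1) * x = k * x ^ k := by
    intro k
    cases k with
    | zero => simp
    | succ k => simp [pow_succ]; ring
  have A : HasSum (fun k : ℕ => ((k:ℝ) + 1 - d) * cc d k * x ^ k) (x * T + (1 - d) * S) := by
    refine hasSum_congr_aux ((H2.mul_left x).add (H1.mul_left (1 - d))) ?_ rfl
    intro k
    linear_combination (-cc d k) * e k
  have B : HasSum (fun k : ℕ => (((k + 1 : ℕ):ℝ) + 1 - d) * cc d (k + 1) * x ^ (k + 1))
      (x * (x * T) + x * d * S) := by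
    refine hasSum_congr_aux ((H2.mul_left (x * x)).add (H1.mul_left (x * d))) ?_ ?_
    · intro k
      have := cc_succ d hd1 k
      push_cast
      linear_combination x ^ (k + 1) * this - cc d k * x * e k
    · ring
  have C := (hasSum_nat_add_iff' (f := fun k : ℕ => ((k:ℝ) + 1 - d) * cc d k * x ^ k) 1).2 A
  have := C.unique B
  simp [cc, poch] at this
  linear_combination this

theorem single_integral_two_linear_factors (d a b : ℝ) (hd0 : 0 < d) (hd1 : d < 1)
    (ha0 : 0 < a) (ha1 : a < 1) (hb0 : 0 < b) (hb1 : b < 1) :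
    (∫ z in (0:ℝ)..1, (1 - a * b * z) ^ (-d) * (1 - b * z) ^ (-d))
    = 1 / (d - 1) * b⁻¹ * (1 - b) ^ (1 - d) * (1 - a * b) ^ (-d) *
        hyp2F1 1 d (2 - d) (a * (1 - b) / (1 - a * b))
      - 1 / (d - 1) * b⁻¹ * hyp2F1 1 d (2 - d) a := by
  rw [hyp_eq_aux, hyp_eq_aux]
  have hu : ∀ z ∈ Set.uIcc (0:ℝ) 1, 0 < 1 - b * z := by
    intro z hz
    rw [Set.uIcc_of_le zero_le_one] at hz
    nlinarith [hz.1, hz.2]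
  have hv : ∀ z ∈ Set.uIcc (0:ℝ) 1, 0 < 1 - a * b * z := by
    intro z hz
    have := hu z hz
    nlinarith
  have key := intervalIntegral.integral_eq_sub_of_hasDerivAt (a := (0:ℝ)) (b := 1)
    (f := fun z => 1 / (d - 1) * b⁻¹ * (1 - b * z) ^ (1 - d) * (1 - a * b * z) ^ (-d) *
        ∑' k : ℕ, cc d k * (a * (1 - b * z) / (1 - a * b * z)) ^ k)
    (f' := fun z => (1 - a * b * z) ^ (-d) * (1 - b * z) ^ (-d)) ?_ ?_
  · rw [key]
    simp
  · intro z hz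
    have hu := hu z hz
    have hv := hv z hz
    set w := a * (1 - b * z) / (1 - a * b * z) with hw
    have hw0 : 0 ≤ w := by positivity
    have hw1 : w < 1 := by rw [hw, div_lt_one hv]; linarith
    have dF := F_deriv d w hd0 hd1 hw0 hw1
    have ode := F_ode d w hd0 hd1 hw0 hw1
    have du : HasDerivAt (fun z => 1 - b * z) (-b) z := by
      simpa using ((hasDerivAt_id z).const_mul b).const_sub 1
    have dv : HasDerivAt (fun z => 1 - a * b * z) (-(a * b)) z := by
      simpa using ((hasDerivAt_id z).const_mul (a * b)).const_sub 1
    have dw := (du.const_mul a).div dv hv.ne'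
    have dFw := HasDerivAt.comp z dF dw
    have dup := du.rpow_const (p := 1 - d) (Or.inl hu.ne')
    have dvp := dv.rpow_const (p := -d) (Or.inl hv.ne')
    have := ((dup.const_mul (1 / (d - 1) * b⁻¹)).mul dvp).mul dFw
    refine this.congr_deriv ?_
    have e1 : (1 - b * z) ^ (1 - d) = (1 - b * z) * (1 - b * z) ^ (-d) := by
      rw [sub_eq_add_neg 1 d, Real.rpow_add hu, Real.rpow_one]
    have e2 : (1 - b * z) ^ (1 - d - 1) = (1 - b * z) ^ (-d) := by ring_nf
    have e3 : (1 - a * b * z) ^ (-d - 1) = (1 - a * b * z) ^ (-d) / (1 - a * b * z) := by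
      rw [Real.rpow_sub hv, Real.rpow_one]
    simp only [Function.comp, Pi.mul_apply, Pi.div_apply]
    rw [e1, e2, e3]
    rw [← hw]
    generalize (∑' k : ℕ, cc d k * w ^ k) = S at *
    generalize (∑' k : ℕ, cc d k * (k * w ^ (k - 1))) = T at *
    generalize (1 - b * z) ^ (-d) = U at *
    generalize (1 - a * b * z) ^ (-d) = V at *
    have hd : d - 1 ≠ 0 := by linarith
    clear this dFw dw dF dup dvp du dv hw0 hw1
    have f1 : (1 - b * z) * (a / (1 - a * b * z)) = w := by rw [hw]; ring
    have f2 : (1 - b * z) * ((a * (-b) * (1 - a * b * z) - a * (1 - b * z) * (-(a * b))) /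
        (1 - a * b * z) ^ 2) = -b * (w * (1 - w)) := by
      rw [hw]
      have hvv : 1 - a * b * z ≠ 0 := hv.ne'
      obtain ⟨v, hv0⟩ : ∃ v, v = 1 - a * b * z := ⟨_, rfl⟩
      rw [← hv0] at hvv ⊢
      field_simp
      rw [hv0]
      ring
    have hC : 1 / (d - 1) * b⁻¹ * b * (d - 1) = 1 := by field_simp
    generalize 1 / (d - 1) * b⁻¹ = C at *
    clear_value w
    linear_combination (C * b * d * U * V * S) * f1 + (C * U * V * T) * f2
      - (C * b * U * V) * ode + U * V * hC
  · apply ContinuousOn.intervalIntegrable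
    intro z hz
    have h1 := (hu z hz).ne'
    have h2 := (hv z hz).ne'
    apply ContinuousAt.continuousWithinAt
    apply ContinuousAt.mul
    · exact ContinuousAt.rpow_const (by fun_prop) (Or.inl h2)
    · exact ContinuousAt.rpow_const (by fun_prop) (Or.inl h1)
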